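/- For every integer r ≥ 3 and every ε > 0 there exists d₀ = d₀(r, ε) such that for every fixed integer d ≥ d₀, with high probability α(H_r(n,d)) ≤ (1+ε)·(r log d/((r−1)d))^{1/(r−1)}·n. -/

import Mathlib

/-!
The bound is a first moment argument over vertex sets `S` of size `k = ⌊Tn⌋ + 1`, where
`T = (1+ε)(r log d / ((r-1)d))^(1/(r-1))`, with switchings in place of the configuration model.

For fixed `S` let `N j` be the number of `d`-regular `r`-uniform hypergraphs with exactly `j` edges
inside `S`. A switching takes an edge `{u₁, …, u_r}` disjoint from `S` and `r` incidences `vᵢ ∈ eᵢ`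
with `vᵢ ∈ S`, `eᵢ ⊄ S`, and exchanges `uᵢ` with `vᵢ` for every `i`: the first edge becomes
`{v₁, …, v_r} ⊆ S`, each `eᵢ` becomes `eᵢ - vᵢ + uᵢ ⊄ S`. Degrees are preserved. Requiring that no
edge meets two of the chosen edges keeps the result simple and excludes only `O(1)` of the `≈ dk`
candidates at each choice. A hypergraph counted by `N j` has at least about `(dn/r) · r! · (dk)^r`
switchings, and at most `(j+1) · r! · (dn)^r` switchings lead to a hypergraph counted by `N (j+1)`.
Hence `N (j+1) * (j+1) ≥ (1-δ) μ * N j` with `μ = (d/r)(k/n)^r n`, and iterating up to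
`j ≈ (1-δ)μ` gives `N 0 ≤ e^{-(1-δ)μ} poly(n)` times the number of all regular hypergraphs.

There are at most `(e/T)^k` sets `S`. Since `log (1/T) ≤ log d / (r-1)` while
`μ/k ≥ (1+ε)^(r-1) log d / (r-1)`, the union bound is `O(k e^{-k})` once `d` is large.

The uniform probability is meaningful only if there is a `d`-regular hypergraph at all: among the
`r`-uniform hypergraphs with `dn/r` edges, one that minimises the sum of squared degrees is regular.
-/

open Finset Filter Real

open scoped Classical

/-- A set of vertices is independent if it contains no edge. -/
def IndepSet {n : ℕ} (E : Finset (Finset (Fin n))) (S : Finset (Fin n)) : Prop :=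
  ∀ e ∈ E, ¬ e ⊆ S

/-- The independence number of the hypergraph with edge set `E`. -/
noncomputable def independenceNumber {n : ℕ} (E : Finset (Finset (Fin n))) : ℕ :=
  sSup {s : ℕ | ∃ S : Finset (Fin n), S.card = s ∧ IndepSet E S}

/-- The family of all `d`-regular `r`-uniform hypergraphs on vertex set `Fin n`. -/
noncomputable def regularFamily (n r d : ℕ) : Finset (Finset (Finset (Fin n))) :=
  Finset.univ.filter (fun E : Finset (Finset (Fin n)) =>
    (∀ e ∈ E, e.card = r) ∧ ∀ v : Fin n, (E.filter (fun e => v ∈ e)).card = d)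

/-- The probability that a uniformly random element of `family` satisfies `P`. -/
noncomputable def uniformProb {α : Type*} (family : Finset α) (P : α → Prop) : ℝ :=
  ((family.filter (fun x => P x)).card : ℝ) / (family.card : ℝ)

/-! ### Counting lemmas -/

lemma pairwise_fin_cons {α : Type*} {R : α → α → Prop} (hR : ∀ a b, R a b → R b a)
    {m : ℕ} {a : α} {t : Fin m → α} (ha : ∀ i, R a (t i)) (ht : Pairwise fun i j ↦ R (t i) (t j)) :
    Pairwise fun i j ↦ R (Fin.cons (α := fun _ ↦ α) a t i) (Fin.cons (α := fun _ ↦ α) a t j) := by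
  intro i j hij
  cases i using Fin.cases with
  | zero =>
    cases j using Fin.cases with
    | zero => exact absurd rfl hij
    | succ j => simpa using ha j
  | succ i =>
    cases j using Fin.cases with
    | zero => simpa using hR _ _ (ha i)
    | succ j => simpa using ht (ne_of_apply_ne Fin.succ hij)

/-- Choose the entries one at a time: each entry excludes at most `c` candidates for the later
ones. -/
lemma pow_card_sub_le_card_pairwise_not {α : Type*} {R : α → α → Prop}
    (hR : ∀ a b, R a b → R b a) {c : ℕ} (m : ℕ) {P : Finset α}
    (hc : ∀ a ∈ P, #{b ∈ P | R a b} ≤ c) :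
    (#P - m * c) ^ m ≤
      #{t ∈ Fintype.piFinset fun _ : Fin m ↦ P | Pairwise fun i j ↦ ¬ R (t i) (t j)} := by
  induction m generalizing P with
  | zero => simp [Subsingleton.pairwise]
  | succ m ih =>
    let tails (a : α) : Finset (Fin m → α) :=
      {t ∈ Fintype.piFinset fun _ ↦ {b ∈ P | ¬ R a b} | Pairwise fun i j ↦ ¬ R (t i) (t j)}
    have card_tails (a : α) (ha : a ∈ P) : (#P - (m + 1) * c) ^ m ≤ #(tails a) := by
      have hfree : #P - c ≤ #{b ∈ P | ¬ R a b} := by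
        have hsplit := card_filter_add_card_filter_not (s := P) (fun b ↦ R a b)
        have := hc a ha
        omega
      calc (#P - (m + 1) * c) ^ m ≤ (#{b ∈ P | ¬ R a b} - m * c) ^ m := by
            gcongr 1
            rw [add_one_mul]
            omega
        _ ≤ #(tails a) := ih fun b hb ↦
            (card_le_card (filter_subset_filter _ (filter_subset _ _))).trans
              (hc b (mem_filter.1 hb).1)
    calc (#P - (m + 1) * c) ^ (m + 1) = (#P - (m + 1) * c) * (#P - (m + 1) * c) ^ m := pow_succ' ..
      _ ≤ #P * (#P - (m + 1) * c) ^ m := by gcongr; omega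
      _ ≤ #(P.sigma tails) := by
        rw [card_sigma, ← smul_eq_mul]
        exact card_nsmul_le_sum _ _ _ card_tails
      _ ≤ _ := by
        refine card_le_card_of_injOn (fun x ↦ Fin.cons (α := fun _ ↦ α) x.1 x.2) ?_ ?_
        · rintro ⟨a, t⟩ hx
          obtain ⟨ha, ht⟩ := mem_sigma.1 hx
          obtain ⟨ht, ht'⟩ := mem_filter.1 ht
          have ht (i : Fin m) : t i ∈ P ∧ ¬ R a (t i) :=
            mem_filter.1 (Fintype.mem_piFinset.1 ht i)
          refine mem_filter.2 ⟨Fintype.mem_piFinset.2 <| Fin.cases ha fun i ↦ (ht i).1, ?_⟩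
          exact pairwise_fin_cons (R := fun x y ↦ ¬ R x y) (fun x y h h' ↦ h (hR y x h'))
            (fun i ↦ (ht i).2) ht'
        · rintro ⟨a, t⟩ _ ⟨b, s⟩ _ h
          obtain ⟨rfl, rfl⟩ := Fin.cons_injective2 h
          rfl

lemma card_injective_image_eq {ι V : Type*} [Fintype ι] [DecidableEq ι] [Fintype V]
    [DecidableEq V] {e : Finset V} (he : #e = Fintype.card ι) :
    #{u : ι → V | Function.Injective u ∧ univ.image u = e} = (Fintype.card ι).factorial := by
  have hemb : Fintype.card (ι ↪ e) = (Fintype.card ι).factorial := by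
    rw [Fintype.card_embedding_eq, Fintype.card_coe, he, Nat.descFactorial_self]
  rw [← hemb, ← card_univ]
  symm
  refine card_bij (fun f _ i ↦ (f i : V)) (fun f _ ↦ ?_) (fun f _ g _ h ↦ ?_) (fun u hu ↦ ?_)
  · have hinj : Function.Injective fun i ↦ (f i : V) := Subtype.val_injective.comp f.injective
    refine mem_filter.2 ⟨mem_univ _, hinj, eq_of_subset_of_card_le ?_ ?_⟩
    · exact image_subset_iff.2 fun i _ ↦ (f i).2
    · rw [card_image_of_injective _ hinj, he, card_univ]
  · ext i
    exact congrFun h i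
  · obtain ⟨hinj, rfl⟩ := (mem_filter.1 hu).2
    exact ⟨⟨fun i ↦ ⟨u i, mem_image_of_mem u (mem_univ i)⟩,
      fun i j hij ↦ hinj (congrArg Subtype.val hij)⟩, mem_univ _, rfl⟩

lemma card_injective_image_mem {ι V : Type*} [Fintype ι] [DecidableEq ι] [Fintype V] [DecidableEq V]
    {D : Finset (Finset V)} (hD : ∀ e ∈ D, #e = Fintype.card ι) :
    #{u : ι → V | Function.Injective u ∧ univ.image u ∈ D} =
      #D * (Fintype.card ι).factorial := by
  rw [card_eq_sum_card_fiberwise (f := fun u : ι → V ↦ univ.image u) (t := D)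
    fun u hu ↦ (mem_filter.1 hu).2.2, ← smul_eq_mul]
  refine sum_eq_card_nsmul fun e he ↦ ?_
  rw [← card_injective_image_eq (hD e he), filter_filter]
  congr 1
  ext u
  simp only [mem_filter, mem_univ, true_and]
  exact ⟨fun h ↦ ⟨h.1.1, h.2⟩, fun h ↦ ⟨⟨h.1, h.2 ▸ he⟩, h.2⟩⟩

lemma card_filter_sdiff_union {α : Type*} [DecidableEq α] {E R A : Finset α} (hR : R ⊆ E)
    (hA : Disjoint A E) (p : α → Prop) [DecidablePred p] :
    #{x ∈ (E \ R) ∪ A | p x} + #{x ∈ R | p x} = #{x ∈ E | p x} + #{x ∈ A | p x} := by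
  have hEA : Disjoint {x ∈ E \ R | p x} {x ∈ A | p x} :=
    disjoint_filter_filter (hA.symm.mono_left sdiff_subset)
  have hER : Disjoint {x ∈ E \ R | p x} {x ∈ R | p x} := disjoint_filter_filter sdiff_disjoint
  have hE : {x ∈ E | p x} = {x ∈ E \ R | p x} ∪ {x ∈ R | p x} := by
    rw [← filter_union, sdiff_union_of_subset hR]
  rw [filter_union, hE, card_union_of_disjoint hEA, card_union_of_disjoint hER]
  omega

/-! ### Regular hypergraphs -/

section Hypergraph

variable {V : Type*} [DecidableEq V] {r d : ℕ} {E : Finset (Finset V)} {S : Finset V}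

/-- The degree of the vertex `v` in the hypergraph with edge set `E`. -/
def vertexDegree (E : Finset (Finset V)) (v : V) : ℕ := #{e ∈ E | v ∈ e}

/-- `E` is the edge set of a `d`-regular `r`-uniform hypergraph on `V`; for `V = Fin n` this is
membership in `regularFamily n r d`. -/
structure IsRegularHypergraph (r d : ℕ) (E : Finset (Finset V)) : Prop where
  card_edge : ∀ e ∈ E, #e = r
  vertexDegree_eq : ∀ v, vertexDegree E v = d

lemma mem_regularFamily {n : ℕ} {E : Finset (Finset (Fin n))} :
    E ∈ regularFamily n r d ↔ IsRegularHypergraph r d E := by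
  rw [regularFamily, mem_filter, and_iff_right (mem_univ _)]
  exact ⟨fun h ↦ ⟨h.1, h.2⟩, fun h ↦ ⟨h.1, h.2⟩⟩

/-- The incidences `(e, v)`, `v ∈ e`, of edges of `E` with vertices in `S`. -/
def incidences (E : Finset (Finset V)) (S : Finset V) : Finset (Finset V × V) :=
  {p ∈ E ×ˢ S | p.2 ∈ p.1}

lemma mem_incidences {p : Finset V × V} : p ∈ incidences E S ↔ (p.1 ∈ E ∧ p.2 ∈ S) ∧ p.2 ∈ p.1 := by
  rw [incidences, mem_filter, mem_product]

lemma card_incidences (E : Finset (Finset V)) (S : Finset V) :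
    #(incidences E S) = ∑ e ∈ E, #(S ∩ e) := by
  simp_rw [incidences, card_filter, sum_product, ← card_filter, filter_mem_eq_inter]

/-- The incidences of `E` with vertices in `S` along edges not contained in `S`. -/
def crossIncidences (E : Finset (Finset V)) (S : Finset V) : Finset (Finset V × V) :=
  incidences {e ∈ E | ¬ e ⊆ S} S

lemma mem_crossIncidences {p : Finset V × V} :
    p ∈ crossIncidences E S ↔ ((p.1 ∈ E ∧ ¬ p.1 ⊆ S) ∧ p.2 ∈ S) ∧ p.2 ∈ p.1 := by
  rw [crossIncidences, mem_incidences, mem_filter]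

/-- Some edge of `E` meets both `a` and `b`. Edges used in a common switching must not be near: then
they are disjoint, and no edge formed from vertices of two of them is in `E` already. -/
def IsNear (E : Finset (Finset V)) (a b : Finset V) : Prop :=
  ∃ g ∈ E, ¬ Disjoint g a ∧ ¬ Disjoint g b

omit [DecidableEq V] in
lemma isNear_symm (a b : Finset V) : IsNear E a b → IsNear E b a :=
  fun ⟨g, hg, ha, hb⟩ ↦ ⟨g, hg, hb, ha⟩

omit [DecidableEq V] in
lemma disjoint_of_not_isNear {a b : Finset V} (ha : a ∈ E) (h : ¬ IsNear E a b) :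
    Disjoint a b := by
  by_contra hab
  exact h ⟨a, ha, fun haa ↦ hab (by simp [(disjoint_self_iff_empty _).1 haa]), hab⟩

namespace IsRegularHypergraph

lemma sum_card_inter (hE : IsRegularHypergraph r d E) (S : Finset V) :
    ∑ e ∈ E, #(S ∩ e) = #S * d :=
  Finset.sum_card_inter fun v _ ↦ hE.vertexDegree_eq v

lemma card_mul_eq [Fintype V] (hE : IsRegularHypergraph r d E) : #E * r = Fintype.card V * d := by
  rw [← sum_card hE.vertexDegree_eq, sum_const_nat hE.card_edge]

lemma card_meeting_le (hE : IsRegularHypergraph r d E) (S : Finset V) :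
    #{e ∈ E | ¬ Disjoint e S} ≤ #S * d := by
  rw [← hE.sum_card_inter S, card_filter]
  refine sum_le_sum fun e _ ↦ ?_
  split_ifs with h
  · exact Nat.zero_le _
  · rwa [Nat.one_le_iff_ne_zero, card_ne_zero, ← not_disjoint_iff_nonempty_inter, disjoint_comm]

lemma card_sub_le_card_disjoint (hE : IsRegularHypergraph r d E) (S : Finset V) :
    #E - #S * d ≤ #{e ∈ E | Disjoint e S} := by
  have hsplit := card_filter_add_card_filter_not (s := E) (Disjoint · S)
  have := hE.card_meeting_le S
  omega

lemma card_crossIncidences (hE : IsRegularHypergraph r d E) (S : Finset V) :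
    #(crossIncidences E S) = #S * d - #{e ∈ E | e ⊆ S} * r := by
  have hinside : ∑ e ∈ E with e ⊆ S, #(S ∩ e) = #{e ∈ E | e ⊆ S} * r :=
    sum_const_nat fun e he ↦ by
      rw [inter_eq_right.2 (mem_filter.1 he).2, hE.card_edge e (mem_filter.1 he).1]
  rw [crossIncidences, card_incidences, ← hE.sum_card_inter S, ← hinside,
    ← sum_filter_add_sum_filter_not E (· ⊆ S), Nat.add_sub_cancel_left]

lemma card_isNear_le (hE : IsRegularHypergraph r d E) (a : Finset V) :
    #{e ∈ E | IsNear E a e} ≤ #a * d * (r * d) := by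
  have hsub : {e ∈ E | IsNear E a e} ⊆
      ({g ∈ E | ¬ Disjoint g a} : Finset _).biUnion fun g ↦ {e ∈ E | ¬ Disjoint e g} := by
    intro e he
    obtain ⟨he, g, hg, hga, hge⟩ := mem_filter.1 he
    exact mem_biUnion.2
      ⟨g, mem_filter.2 ⟨hg, hga⟩, mem_filter.2 ⟨he, fun h ↦ hge h.symm⟩⟩
  calc #{e ∈ E | IsNear E a e} ≤ #{g ∈ E | ¬ Disjoint g a} * (r * d) := by
        refine (card_le_card hsub).trans (card_biUnion_le_card_mul _ _ _ fun g hg ↦ ?_)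
        rw [← hE.card_edge g (mem_filter.1 hg).1]
        exact hE.card_meeting_le g
    _ ≤ #a * d * (r * d) := by gcongr; exact hE.card_meeting_le a

lemma card_crossIncidences_isNear_le (hE : IsRegularHypergraph r d E) {a : Finset V} (ha : a ∈ E)
    (S : Finset V) : #{p ∈ crossIncidences E S | IsNear E a p.1} ≤ r * (r * d) ^ 2 := by
  have hsub : {p ∈ crossIncidences E S | IsNear E a p.1} ⊆
      incidences {e ∈ E | IsNear E a e} S := by
    intro p hp
    obtain ⟨hp, hnear⟩ := mem_filter.1 hp
    obtain ⟨⟨he, hv⟩, hve⟩ := mem_incidences.1 hp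
    exact mem_incidences.2 ⟨⟨mem_filter.2 ⟨(mem_filter.1 he).1, hnear⟩, hv⟩, hve⟩
  calc #{p ∈ crossIncidences E S | IsNear E a p.1}
      ≤ ∑ e ∈ E with IsNear E a e, #(S ∩ e) := (card_le_card hsub).trans (card_incidences _ _).le
    _ ≤ #{e ∈ E | IsNear E a e} * r := by
        refine sum_le_card_nsmul _ _ _ fun e he ↦ ?_
        rw [← hE.card_edge e (mem_filter.1 he).1]
        exact card_le_card inter_subset_right
    _ ≤ #a * d * (r * d) * r := by gcongr; exact hE.card_isNear_le a
    _ = r * (r * d) ^ 2 := by rw [hE.card_edge a ha]; ring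

end IsRegularHypergraph

/-! ### Switchings -/

/-- The data of a switching: an ordered edge `base` outside `S`, and `r` further edges `edge i` with
a chosen vertex `pivot i ∈ S` each. The switching exchanges the vertices `base i` and `pivot i`, so
that the pivots become an edge inside `S`. -/
@[ext]
structure SwitchData (V : Type*) (r : ℕ) where
  base : Fin r → V
  edge : Fin r → Finset V
  pivot : Fin r → V

namespace SwitchData

noncomputable instance [Fintype V] : Fintype (SwitchData V r) :=
  Fintype.ofInjective (fun t ↦ (t.base, t.edge, t.pivot)) fun _ _ h ↦ by
    simpa only [Prod.mk.injEq, ← SwitchData.ext_iff] using h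

/-- The edge enumerated by `base`. -/
def baseEdge (t : SwitchData V r) : Finset V := univ.image t.base

/-- The `r + 1` edges deleted by the switching. -/
def edges (t : SwitchData V r) : Finset (Finset V) := insert t.baseEdge (univ.image t.edge)

/-- The inverse switching; its edges are those created by `t`. -/
def reverse (t : SwitchData V r) : SwitchData V r where
  base := t.pivot
  edge i := insert (t.base i) ((t.edge i).erase (t.pivot i))
  pivot := t.base

/-- The hypergraph obtained from `E` by the switching. -/
def apply (t : SwitchData V r) (E : Finset (Finset V)) : Finset (Finset V) :=
  (E \ t.edges) ∪ t.reverse.edges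

variable {t : SwitchData V r}

lemma mem_edges {e : Finset V} : e ∈ t.edges ↔ e = t.baseEdge ∨ ∃ i, t.edge i = e := by
  simp only [edges, mem_insert, mem_image, mem_univ, true_and]

lemma base_mem_baseEdge (t : SwitchData V r) (i : Fin r) : t.base i ∈ t.baseEdge :=
  mem_image_of_mem t.base (mem_univ i)

lemma base_mem_reverse_edge (t : SwitchData V r) (i : Fin r) : t.base i ∈ t.reverse.edge i :=
  mem_insert_self ..

lemma reverse_mem_incidences [Fintype V] (t : SwitchData V r) (E : Finset (Finset V)) (i : Fin r) :
    (t.reverse.edge i, t.reverse.pivot i) ∈ incidences (t.apply E) univ :=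
  mem_incidences.2 ⟨⟨mem_union_right _ (mem_edges.2 (.inr ⟨i, rfl⟩)), mem_univ _⟩,
    t.base_mem_reverse_edge i⟩

lemma vertexDegree_edges (hbase : Function.Injective t.base) (hedge : Function.Injective t.edge)
    (hne : ∀ i, t.edge i ≠ t.baseEdge) (w : V) :
    vertexDegree t.edges w =
      ∑ i, ((if w = t.base i then 1 else 0) + if w ∈ t.edge i then 1 else 0) := by
  have hbaseEdge : (if w ∈ t.baseEdge then 1 else 0) = ∑ i, if w = t.base i then 1 else 0 := by
    have himage := sum_image (s := univ) (f := fun v ↦ if w = v then 1 else 0)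
      (g := t.base) (hbase.injOn)
    rw [← himage, sum_ite_eq, baseEdge]
  have hnotMem : t.baseEdge ∉ univ.image t.edge := by
    simpa only [mem_image, mem_univ, true_and, not_exists] using hne
  rw [vertexDegree, card_filter, edges, sum_insert hnotMem, sum_image hedge.injOn, hbaseEdge,
    sum_add_distrib]

/-- The conditions under which the switching `t` can be applied to `E` and creates exactly one
edge inside `S`. -/
structure IsAdmissible (t : SwitchData V r) (E : Finset (Finset V)) (S : Finset V) : Prop where
  base_injective : Function.Injective t.base
  baseEdge_mem : t.baseEdge ∈ E
  disjoint_baseEdge : Disjoint t.baseEdge S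
  edge_mem : ∀ i, t.edge i ∈ E
  edge_not_subset : ∀ i, ¬ t.edge i ⊆ S
  pivot_mem : ∀ i, t.pivot i ∈ S
  pivot_mem_edge : ∀ i, t.pivot i ∈ t.edge i
  not_isNear_baseEdge : ∀ i, ¬ IsNear E t.baseEdge (t.edge i)
  not_isNear_edge : Pairwise fun i j ↦ ¬ IsNear E (t.edge i) (t.edge j)

namespace IsAdmissible

lemma base_notMem (ht : t.IsAdmissible E S) (i : Fin r) : t.base i ∉ S :=
  disjoint_left.1 ht.disjoint_baseEdge (t.base_mem_baseEdge i)

lemma base_notMem_edge (ht : t.IsAdmissible E S) (i j : Fin r) : t.base i ∉ t.edge j :=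
  disjoint_left.1 (disjoint_of_not_isNear ht.baseEdge_mem (ht.not_isNear_baseEdge j))
    (t.base_mem_baseEdge i)

lemma eq_of_mem_edge (ht : t.IsAdmissible E S) {i j : Fin r} {w : V} (hi : w ∈ t.edge i)
    (hj : w ∈ t.edge j) : i = j := by
  by_contra hij
  exact disjoint_left.1 (disjoint_of_not_isNear (ht.edge_mem i) (ht.not_isNear_edge hij)) hi hj

lemma pivot_injective (ht : t.IsAdmissible E S) : Function.Injective t.pivot := fun i j h ↦
  ht.eq_of_mem_edge (ht.pivot_mem_edge i) (h ▸ ht.pivot_mem_edge j)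

lemma edge_injective (ht : t.IsAdmissible E S) : Function.Injective t.edge := fun i _ h ↦
  ht.eq_of_mem_edge (ht.pivot_mem_edge i) (h ▸ ht.pivot_mem_edge i)

lemma reverse_edge_injective (ht : t.IsAdmissible E S) :
    Function.Injective t.reverse.edge := fun i j h ↦ by
  have hmem : t.base i ∈ t.reverse.edge j := h ▸ t.base_mem_reverse_edge i
  rcases mem_insert.1 hmem with hij | hij
  · exact ht.base_injective hij
  · exact absurd (mem_of_mem_erase hij) (ht.base_notMem_edge i j)

lemma reverse_baseEdge_subset (ht : t.IsAdmissible E S) : t.reverse.baseEdge ⊆ S :=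
  image_subset_iff.2 fun i _ ↦ ht.pivot_mem i

lemma not_reverse_edge_subset (ht : t.IsAdmissible E S) (i : Fin r) : ¬ t.reverse.edge i ⊆ S :=
  fun h ↦ ht.base_notMem i (h (t.base_mem_reverse_edge i))

lemma reverse_baseEdge_notMem (ht : t.IsAdmissible E S) (hr : 2 ≤ r) :
    t.reverse.baseEdge ∉ E := by
  have hmeets (i : Fin r) : ¬ Disjoint t.reverse.baseEdge (t.edge i) :=
    not_disjoint_iff.2 ⟨t.pivot i, t.reverse.base_mem_baseEdge i, ht.pivot_mem_edge i⟩
  have hne : (⟨0, by omega⟩ : Fin r) ≠ ⟨1, by omega⟩ := by simp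
  exact fun h ↦ ht.not_isNear_edge hne ⟨_, h, hmeets _, hmeets _⟩

lemma reverse_edge_notMem (ht : t.IsAdmissible E S) (hr : 2 ≤ r) (hE : ∀ e ∈ E, #e = r)
    (i : Fin r) : t.reverse.edge i ∉ E := by
  have hcard : 1 < #(t.edge i) := by rw [hE _ (ht.edge_mem i)]; omega
  obtain ⟨w, hw, hne⟩ := exists_mem_ne hcard (t.pivot i)
  exact fun h ↦ ht.not_isNear_baseEdge i
    ⟨_, h, not_disjoint_iff.2 ⟨_, t.base_mem_reverse_edge i, t.base_mem_baseEdge i⟩,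
      not_disjoint_iff.2 ⟨w, mem_insert_of_mem (mem_erase.2 ⟨hne, hw⟩), hw⟩⟩

lemma edges_subset (ht : t.IsAdmissible E S) : t.edges ⊆ E :=
  insert_subset ht.baseEdge_mem (image_subset_iff.2 fun i _ ↦ ht.edge_mem i)

lemma disjoint_reverse_edges (ht : t.IsAdmissible E S) (hr : 2 ≤ r) (hE : ∀ e ∈ E, #e = r) :
    Disjoint t.reverse.edges E := by
  refine disjoint_left.2 fun e he ↦ ?_
  obtain rfl | ⟨i, rfl⟩ := mem_edges.1 he
  · exact ht.reverse_baseEdge_notMem hr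
  · exact ht.reverse_edge_notMem hr hE i

lemma reverse_reverse (ht : t.IsAdmissible E S) : t.reverse.reverse = t := by
  refine SwitchData.ext rfl (funext fun i ↦ ?_) rfl
  change insert (t.pivot i) ((insert (t.base i) ((t.edge i).erase (t.pivot i))).erase (t.base i)) =
    t.edge i
  rw [erase_insert fun h ↦ ht.base_notMem_edge i i (mem_of_mem_erase h),
    insert_erase (ht.pivot_mem_edge i)]

lemma apply_reverse_apply (ht : t.IsAdmissible E S) (hr : 2 ≤ r) (hE : ∀ e ∈ E, #e = r) :
    t.reverse.apply (t.apply E) = E := by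
  rw [apply, ht.reverse_reverse, apply, union_sdiff_cancel_right,
    sdiff_union_of_subset ht.edges_subset]
  exact (ht.disjoint_reverse_edges hr hE).symm.mono_left sdiff_subset

lemma vertexDegree_reverse_edges (ht : t.IsAdmissible E S) (w : V) :
    vertexDegree t.reverse.edges w = vertexDegree t.edges w := by
  have hne (i : Fin r) : t.edge i ≠ t.baseEdge := fun h ↦
    ht.base_notMem_edge i i (h ▸ t.base_mem_baseEdge i)
  have hne_reverse (i : Fin r) : t.reverse.edge i ≠ t.reverse.baseEdge := fun h ↦
    ht.not_reverse_edge_subset i (h ▸ ht.reverse_baseEdge_subset)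
  rw [vertexDegree_edges ht.base_injective ht.edge_injective hne,
    vertexDegree_edges ht.pivot_injective ht.reverse_edge_injective hne_reverse]
  refine sum_congr rfl fun i _ ↦ ?_
  have hbase := ht.base_notMem_edge i i
  have hpivot := ht.pivot_mem_edge i
  by_cases hw : w = t.base i <;> by_cases hw' : w = t.pivot i <;> grind [reverse]

lemma isRegularHypergraph_apply (ht : t.IsAdmissible E S) (hr : 2 ≤ r)
    (hE : IsRegularHypergraph r d E) : IsRegularHypergraph r d (t.apply E) where
  card_edge e he := by
    rcases mem_union.1 he with he | he
    · exact hE.card_edge e (mem_sdiff.1 he).1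
    obtain rfl | ⟨i, rfl⟩ := mem_edges.1 he
    · exact (card_image_of_injective _ ht.pivot_injective).trans (card_fin r)
    · have hnotMem : t.base i ∉ (t.edge i).erase (t.pivot i) := fun h ↦
        ht.base_notMem_edge i i (mem_of_mem_erase h)
      exact (card_insert_of_notMem hnotMem).trans <|
        (card_erase_add_one (ht.pivot_mem_edge i)).trans (hE.card_edge _ (ht.edge_mem i))
  vertexDegree_eq w := by
    have hcount := card_filter_sdiff_union ht.edges_subset
      (ht.disjoint_reverse_edges hr hE.card_edge) (w ∈ ·)
    have hdegree := ht.vertexDegree_reverse_edges w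
    rw [← hE.vertexDegree_eq w]
    exact add_right_cancel (hcount.trans (congrArg (_ + ·) hdegree))

lemma filter_edges_subset (ht : t.IsAdmissible E S) (hr : 0 < r) :
    {e ∈ t.edges | e ⊆ S} = ∅ := by
  refine filter_eq_empty_iff.2 fun e he ↦ ?_
  obtain rfl | ⟨i, rfl⟩ := mem_edges.1 he
  · exact fun h ↦ ht.base_notMem ⟨0, hr⟩ (h (t.base_mem_baseEdge _))
  · exact ht.edge_not_subset i

lemma filter_reverse_edges_subset (ht : t.IsAdmissible E S) :
    {e ∈ t.reverse.edges | e ⊆ S} = {t.reverse.baseEdge} := by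
  ext e
  rw [mem_filter, mem_singleton]
  refine ⟨fun ⟨he, heS⟩ ↦ (mem_edges.1 he).resolve_right ?_, ?_⟩
  · rintro ⟨i, rfl⟩
    exact ht.not_reverse_edge_subset i heS
  · rintro rfl
    exact ⟨mem_edges.2 (.inl rfl), ht.reverse_baseEdge_subset⟩

lemma card_apply_subset (ht : t.IsAdmissible E S) (hr : 2 ≤ r) (hE : ∀ e ∈ E, #e = r) :
    #{e ∈ t.apply E | e ⊆ S} = #{e ∈ E | e ⊆ S} + 1 := by
  have hcount := card_filter_sdiff_union ht.edges_subset (ht.disjoint_reverse_edges hr hE) (· ⊆ S)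
  rwa [ht.filter_edges_subset (by omega), ht.filter_reverse_edges_subset, card_empty,
    card_singleton, add_zero] at hcount

end IsAdmissible

end SwitchData

lemma IsRegularHypergraph.card_incidence_tuples_ge (hE : IsRegularHypergraph r d E) {a : Finset V}
    (ha : a ∈ E) (S : Finset V) :
    (#(crossIncidences E S) - (r + 1) * (r * (r * d) ^ 2)) ^ r ≤
      #{p ∈ Fintype.piFinset fun _ : Fin r ↦ {q ∈ crossIncidences E S | ¬ IsNear E a q.1} |
        Pairwise fun i j ↦ ¬ IsNear E (p i).1 (p j).1} := by
  have hfar : #(crossIncidences E S) - r * (r * d) ^ 2 ≤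
      #{q ∈ crossIncidences E S | ¬ IsNear E a q.1} := by
    have hsplit := card_filter_add_card_filter_not (s := crossIncidences E S)
      (fun q ↦ IsNear E a q.1)
    have := hE.card_crossIncidences_isNear_le ha S
    omega
  calc (#(crossIncidences E S) - (r + 1) * (r * (r * d) ^ 2)) ^ r
      ≤ (#{q ∈ crossIncidences E S | ¬ IsNear E a q.1} - r * (r * (r * d) ^ 2)) ^ r := by
        gcongr 1
        rw [add_one_mul]
        omega
    _ ≤ _ := by
      refine pow_card_sub_le_card_pairwise_not (R := fun p q : Finset V × V ↦ IsNear E p.1 q.1)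
        (fun p q ↦ isNear_symm p.1 q.1) r fun p hp ↦ ?_
      have hpE : p.1 ∈ E := (mem_crossIncidences.1 (mem_filter.1 hp).1).1.1.1
      exact (card_le_card (filter_subset_filter _ (filter_subset _ _))).trans
        (hE.card_crossIncidences_isNear_le hpE S)

variable [Fintype V]

/-- The switchings applicable to `E` that create an edge inside `S`. -/
noncomputable def switchings (r : ℕ) (E : Finset (Finset V)) (S : Finset V) :
    Finset (SwitchData V r) :=
  {t | t.IsAdmissible E S}

lemma IsRegularHypergraph.card_switchings_ge (hE : IsRegularHypergraph r d E) (S : Finset V) :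
    (#E - #S * d) * r.factorial *
      (#S * d - #{e ∈ E | e ⊆ S} * r - (r + 1) * (r * (r * d) ^ 2)) ^ r ≤
      #(switchings r E S) := by
  let bases : Finset (Fin r → V) :=
    {u | Function.Injective u ∧ univ.image u ∈ {e ∈ E | Disjoint e S}}
  let tuples (u : Fin r → V) : Finset (Fin r → Finset V × V) :=
    {p ∈ Fintype.piFinset fun _ ↦ {q ∈ crossIncidences E S | ¬ IsNear E (univ.image u) q.1} |
      Pairwise fun i j ↦ ¬ IsNear E (p i).1 (p j).1}
  have card_bases : #bases = #{e ∈ E | Disjoint e S} * r.factorial := by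
    simpa only [Fintype.card_fin] using card_injective_image_mem (ι := Fin r)
      (D := {e ∈ E | Disjoint e S}) fun e he ↦
        (hE.card_edge e (mem_filter.1 he).1).trans (Fintype.card_fin r).symm
  calc (#E - #S * d) * r.factorial *
        (#S * d - #{e ∈ E | e ⊆ S} * r - (r + 1) * (r * (r * d) ^ 2)) ^ r
      ≤ #bases * (#(crossIncidences E S) - (r + 1) * (r * (r * d) ^ 2)) ^ r := by
        rw [card_bases, hE.card_crossIncidences]
        gcongr
        exact hE.card_sub_le_card_disjoint S
    _ ≤ #(bases.sigma tuples) := by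
        rw [card_sigma, ← smul_eq_mul]
        exact card_nsmul_le_sum _ _ _ fun u hu ↦
          hE.card_incidence_tuples_ge (mem_filter.1 (mem_filter.1 hu).2.2).1 S
    _ ≤ #(switchings r E S) := by
        refine card_le_card_of_injOn
          (fun x ↦ ⟨x.1, fun i ↦ (x.2 i).1, fun i ↦ (x.2 i).2⟩) ?_ ?_
        · rintro ⟨u, p⟩ hx
          obtain ⟨hu, hp⟩ := mem_sigma.1 hx
          obtain ⟨hinj, hbase⟩ := (mem_filter.1 hu).2
          obtain ⟨hbaseE, hbaseS⟩ := mem_filter.1 hbase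
          obtain ⟨hp, hpair⟩ := mem_filter.1 hp
          have hp (i : Fin r) := mem_filter.1 (Fintype.mem_piFinset.1 hp i)
          have hcross (i : Fin r) := mem_crossIncidences.1 (hp i).1
          exact mem_filter.2 ⟨mem_univ _, hinj, hbaseE, hbaseS, fun i ↦ (hcross i).1.1.1,
            fun i ↦ (hcross i).1.1.2, fun i ↦ (hcross i).1.2, fun i ↦ (hcross i).2,
            fun i ↦ (hp i).2, hpair⟩
        · rintro ⟨u, p⟩ _ ⟨u', p'⟩ _ h
          obtain ⟨rfl, hedge, hpivot⟩ := SwitchData.mk.inj h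
          obtain rfl : p = p' := funext fun i ↦
            Prod.ext (congrFun hedge i) (congrFun hpivot i)
          rfl

/-- The `d`-regular `r`-uniform hypergraphs with exactly `j` edges inside `S`. -/
noncomputable def level (r d : ℕ) (S : Finset V) (j : ℕ) : Finset (Finset (Finset V)) :=
  {E | IsRegularHypergraph r d E ∧ #{e ∈ E | e ⊆ S} = j}

lemma mem_level {j : ℕ} :
    E ∈ level r d S j ↔ IsRegularHypergraph r d E ∧ #{e ∈ E | e ⊆ S} = j := by
  rw [level, mem_filter, and_iff_right (mem_univ _)]

/-- Contains the data of every switching leading into `E`, read backwards: an ordering of an edge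
inside `S`, and `r` incidences. -/
noncomputable def reverseSwitchings (r : ℕ) (E : Finset (Finset V)) (S : Finset V) :
    Finset ((Fin r → V) × (Fin r → Finset V × V)) :=
  ({u | Function.Injective u ∧ univ.image u ∈ {e ∈ E | e ⊆ S}} : Finset (Fin r → V)) ×ˢ
    Fintype.piFinset fun _ ↦ incidences E univ

lemma IsRegularHypergraph.card_reverseSwitchings (hE : IsRegularHypergraph r d E) (S : Finset V) :
    #(reverseSwitchings r E S) =
      #{e ∈ E | e ⊆ S} * r.factorial * (Fintype.card V * d) ^ r := by
  have hD (e) (he : e ∈ {e ∈ E | e ⊆ S}) : #e = Fintype.card (Fin r) :=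
    (hE.card_edge e (mem_filter.1 he).1).trans (Fintype.card_fin r).symm
  rw [reverseSwitchings, card_product, card_injective_image_mem hD, Fintype.card_piFinset_const,
    card_incidences, hE.sum_card_inter, card_univ, Fintype.card_fin]

/-- A switching is recovered from its reverse data together with the hypergraph it produces. -/
lemma card_sigma_switchings_le (hr : 2 ≤ r) (S : Finset V) (j : ℕ) :
    #((level r d S j).sigma fun E ↦ switchings r E S) ≤
      #((level r d S (j + 1)).sigma fun E ↦ reverseSwitchings r E S) := by
  refine card_le_card_of_injOn (fun x ↦ ⟨x.2.apply x.1,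
    x.2.reverse.base, fun i ↦ (x.2.reverse.edge i, x.2.reverse.pivot i)⟩) ?_ ?_
  · rintro ⟨E, t⟩ hx
    obtain ⟨hE, ht⟩ := mem_sigma.1 hx
    obtain ⟨hE, hj⟩ := mem_level.1 hE
    replace ht : t.IsAdmissible E S := (mem_filter.1 ht).2
    refine mem_sigma.2 ⟨mem_level.2 ⟨ht.isRegularHypergraph_apply hr hE, ?_⟩, mem_product.2
      ⟨mem_filter.2 ⟨mem_univ _, ht.pivot_injective, mem_filter.2 ⟨?_, ?_⟩⟩, ?_⟩⟩
    · rw [ht.card_apply_subset hr hE.card_edge]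
      exact congrArg (· + 1) hj
    · exact mem_union_right _ (SwitchData.mem_edges.2 (.inl rfl))
    · exact ht.reverse_baseEdge_subset
    · exact Fintype.mem_piFinset.2 fun i ↦ t.reverse_mem_incidences E i
  · rintro ⟨E, t⟩ hx ⟨E', t'⟩ hx' h
    obtain ⟨hE, ht⟩ := mem_sigma.1 hx
    obtain ⟨hE', ht'⟩ := mem_sigma.1 hx'
    replace hE := (mem_level.1 hE).1.card_edge
    replace hE' := (mem_level.1 hE').1.card_edge
    replace ht : t.IsAdmissible E S := (mem_filter.1 ht).2
    replace ht' : t'.IsAdmissible E' S := (mem_filter.1 ht').2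
    obtain ⟨happly, hdata⟩ := Sigma.mk.inj h
    obtain ⟨hbase, hincidence⟩ := Prod.mk.inj (eq_of_heq hdata)
    have hreverse : t.reverse = t'.reverse := SwitchData.ext hbase
      (funext fun i ↦ (Prod.mk.inj (congrFun hincidence i)).1)
      (funext fun i ↦ (Prod.mk.inj (congrFun hincidence i)).2)
    obtain rfl : t = t' := by rw [← ht.reverse_reverse, hreverse, ht'.reverse_reverse]
    obtain rfl : E = E' := by
      rw [← ht.apply_reverse_apply hr hE, ← ht'.apply_reverse_apply hr hE']
      exact congrArg t.reverse.apply happly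
    rfl

lemma card_level_mul_le (hr : 2 ≤ r) (S : Finset V) (j : ℕ) :
    #(level r d S j) * ((Fintype.card V * d - r * (#S * d)) *
        (#S * d - r * j - (r + 1) * (r * (r * d) ^ 2)) ^ r) ≤
      #(level r d S (j + 1)) * ((j + 1) * r * (Fintype.card V * d) ^ r) := by
  set K := (#S * d - r * j - (r + 1) * (r * (r * d) ^ 2)) ^ r
  have hlower (E) (hE : E ∈ level r d S j) :
      (Fintype.card V * d - r * (#S * d)) * r.factorial * K ≤ r * #(switchings r E S) := by
    obtain ⟨hE, hj⟩ := mem_level.1 hE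
    have hcard := hE.card_switchings_ge S
    rw [hj, mul_comm j r] at hcard
    calc (Fintype.card V * d - r * (#S * d)) * r.factorial * K
        = r * ((#E - #S * d) * r.factorial * K) := by
          rw [← hE.card_mul_eq, mul_comm #E r, ← Nat.mul_sub]; ring
      _ ≤ _ := Nat.mul_le_mul_left r hcard
  have hupper : #((level r d S (j + 1)).sigma fun E ↦ reverseSwitchings r E S) =
      #(level r d S (j + 1)) * ((j + 1) * r.factorial * (Fintype.card V * d) ^ r) := by
    rw [card_sigma]
    refine sum_const_nat fun E hE ↦ ?_
    obtain ⟨hE, hj⟩ := mem_level.1 hE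
    rw [hE.card_reverseSwitchings, hj]
  refine Nat.le_of_mul_le_mul_right ?_ r.factorial_pos
  calc #(level r d S j) * ((Fintype.card V * d - r * (#S * d)) * K) * r.factorial
      = #(level r d S j) • ((Fintype.card V * d - r * (#S * d)) * r.factorial * K) := by
        rw [smul_eq_mul]; ring
    _ ≤ ∑ E ∈ level r d S j, r * #(switchings r E S) := card_nsmul_le_sum _ _ _ hlower
    _ = r * #((level r d S j).sigma fun E ↦ switchings r E S) := by rw [card_sigma, mul_sum]
    _ ≤ r * (#(level r d S (j + 1)) *
          ((j + 1) * r.factorial * (Fintype.card V * d) ^ r)) := by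
        rw [← hupper]
        exact Nat.mul_le_mul_left r (card_sigma_switchings_le hr S j)
    _ = _ := by ring

/-! ### Existence of regular hypergraphs -/

/-- The hypergraph `E` with the vertex `u` of the edge `e` replaced by `v`. -/
def exchangeVertex (E : Finset (Finset V)) (e : Finset V) (u v : V) : Finset (Finset V) :=
  (E \ {e}) ∪ {insert v (e.erase u)}

omit [Fintype V] in
/-- If all exchanges were blocked, `e ↦ insert v (e.erase u)` would inject the edges through `u`
only into those through `v` only. -/
lemma exists_exchangeable_edge {u v : V} (hlt : vertexDegree E v < vertexDegree E u) :
    ∃ e ∈ E, u ∈ e ∧ v ∉ e ∧ insert v (e.erase u) ∉ E := by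
  by_contra! hblocked
  have huv : u ≠ v := ne_of_apply_ne (vertexDegree E) hlt.ne'
  have hle : #{e ∈ E | u ∈ e ∧ v ∉ e} ≤ #{e ∈ E | v ∈ e ∧ u ∉ e} := by
    refine card_le_card_of_injOn (fun e ↦ insert v (e.erase u)) (fun e he ↦ ?_) ?_
    · obtain ⟨he, hu, hv⟩ := mem_filter.1 he
      exact mem_filter.2 ⟨hblocked e he hu hv, mem_insert_self _ _, by simp [huv]⟩
    · refine Set.LeftInvOn.injOn (f₁' := fun e ↦ insert u (e.erase v)) fun e he ↦ ?_
      obtain ⟨-, hu, hv⟩ := mem_filter.1 he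
      simp only [erase_insert fun h ↦ hv (mem_of_mem_erase h), insert_erase hu]
  have hu := card_filter_add_card_filter_not (s := {e ∈ E | u ∈ e}) (v ∈ ·)
  have hv := card_filter_add_card_filter_not (s := {e ∈ E | v ∈ e}) (u ∈ ·)
  simp only [filter_filter, and_comm (a := v ∈ _) (b := u ∈ _)] at hu hv
  simp only [vertexDegree] at hlt
  omega

omit [Fintype V] in
lemma card_exchangeVertex {e : Finset V} {u v : V} (he : e ∈ E)
    (hnew : insert v (e.erase u) ∉ E) : #(exchangeVertex E e u v) = #E := by
  have hdisj : Disjoint (E \ {e}) {insert v (e.erase u)} :=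
    disjoint_singleton_right.2 fun h ↦ hnew (mem_sdiff.1 h).1
  rw [exchangeVertex, card_union_of_disjoint hdisj, card_singleton, ← erase_eq,
    card_erase_add_one he]

omit [Fintype V] in
lemma vertexDegree_exchangeVertex {e : Finset V} {u v : V} (he : e ∈ E) (hu : u ∈ e) (hv : v ∉ e)
    (hnew : insert v (e.erase u) ∉ E) (w : V) :
    vertexDegree (exchangeVertex E e u v) w + (if w = u then 1 else 0) =
      vertexDegree E w + if w = v then 1 else 0 := by
  have hcount := card_filter_sdiff_union (singleton_subset_iff.2 he)
    (disjoint_singleton_left.2 hnew) (w ∈ ·)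
  simp only [card_filter _ {e}, card_filter _ {insert v (e.erase u)}, sum_singleton] at hcount
  change vertexDegree (exchangeVertex E e u v) w + _ = vertexDegree E w + _ at hcount
  by_cases hwu : w = u <;> by_cases hwv : w = v <;> grind

lemma sum_sq_lt_sum_sq_of_exchange {f g : V → ℕ} {u v : V} (hlt : f v + 1 < f u)
    (hg : ∀ w, g w + (if w = u then 1 else 0) = f w + if w = v then 1 else 0) :
    ∑ w, g w ^ 2 < ∑ w, f w ^ 2 := by
  have huv : u ≠ v := by rintro rfl; omega
  have hsq (w : V) : (g w : ℤ) ^ 2 - (f w : ℤ) ^ 2 =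
      (if w = v then 2 * (f v : ℤ) + 1 else 0) + if w = u then 1 - 2 * (f u : ℤ) else 0 := by
    have hgw := hg w
    zify at hgw
    by_cases hwu : w = u <;> by_cases hwv : w = v <;> grind
  have hsum : ∑ w, (g w : ℤ) ^ 2 - ∑ w, (f w : ℤ) ^ 2 = 2 * (f v : ℤ) + 1 + (1 - 2 * f u) := by
    simp_rw [← sum_sub_distrib, hsq, sum_add_distrib, sum_ite_eq', mem_univ, if_true]
  zify at hlt ⊢
  linarith

lemma exists_balanced_hypergraph {m : ℕ} (hm : m ≤ (Fintype.card V).choose r) :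
    ∃ E : Finset (Finset V), #E = m ∧ (∀ e ∈ E, #e = r) ∧
      ∀ u v, vertexDegree E u ≤ vertexDegree E v + 1 := by
  have hne : (powersetCard m (powersetCard r (univ : Finset V))).Nonempty :=
    powersetCard_nonempty.2 (by rwa [card_powersetCard, card_univ])
  obtain ⟨E, hE, hmin⟩ := exists_min_image _ (fun E ↦ ∑ w, vertexDegree E w ^ 2) hne
  obtain ⟨hsub, hcard⟩ := mem_powersetCard.1 hE
  have huniform (e) (he : e ∈ E) : #e = r := (mem_powersetCard.1 (hsub he)).2
  refine ⟨E, hcard, huniform, fun u v ↦ ?_⟩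
  by_contra! hlt
  obtain ⟨e, he, hu, hv, hnew⟩ := exists_exchangeable_edge (E := E) (u := u) (v := v) (by omega)
  have hcard_new : #(insert v (e.erase u)) = r := by
    rw [card_insert_of_notMem fun h ↦ hv (mem_of_mem_erase h), card_erase_add_one hu,
      huniform e he]
  have hmem : exchangeVertex E e u v ∈ powersetCard m (powersetCard r univ) := by
    refine mem_powersetCard.2 ⟨union_subset (sdiff_subset.trans hsub) ?_, ?_⟩
    · exact singleton_subset_iff.2 (mem_powersetCard.2 ⟨subset_univ _, hcard_new⟩)
    · rw [card_exchangeVertex he hnew, hcard]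
  exact (hmin _ hmem).not_gt
    (sum_sq_lt_sum_sq_of_exchange hlt (vertexDegree_exchangeVertex he hu hv hnew))

omit [DecidableEq V] in
lemma eq_of_sum_eq_of_forall_le_add_one {f : V → ℕ} (hsum : ∑ v, f v = Fintype.card V * d)
    (hf : ∀ u v, f u ≤ f v + 1) (u : V) : f u = d := by
  have hconst : ∑ _v : V, d = ∑ v, f v := by simpa using hsum.symm
  refine le_antisymm (not_lt.1 fun h ↦ ?_) (not_lt.1 fun h ↦ ?_)
  · refine hconst.not_lt (sum_lt_sum (fun v _ ↦ ?_) ⟨u, mem_univ u, h⟩)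
    have := hf u v
    omega
  · refine hconst.not_gt (sum_lt_sum (fun v _ ↦ ?_) ⟨u, mem_univ u, h⟩)
    have := hf v u
    omega

lemma sum_vertexDegree (E : Finset (Finset V)) : ∑ v, vertexDegree E v = ∑ e ∈ E, #e := by
  simp_rw [vertexDegree, card_filter]
  rw [sum_comm]
  simp only [sum_boole, filter_univ_mem, Nat.cast_id]

theorem exists_isRegularHypergraph (hdvd : r ∣ d * Fintype.card V)
    (hle : d * Fintype.card V / r ≤ (Fintype.card V).choose r) :
    ∃ E : Finset (Finset V), IsRegularHypergraph r d E := by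
  obtain ⟨E, hcard, huniform, hbalanced⟩ := exists_balanced_hypergraph hle
  refine ⟨E, huniform, eq_of_sum_eq_of_forall_le_add_one ?_ hbalanced⟩
  rw [sum_vertexDegree, sum_const_nat huniform, hcard, Nat.div_mul_cancel hdvd, mul_comm]

end Hypergraph

lemma div_le_choose_of_le {n r d : ℕ} (hr : 2 ≤ r) (hn : r + (r - 1).factorial * d ≤ n) :
    d * n / r ≤ n.choose r := by
  obtain ⟨k, rfl⟩ : ∃ k, r = k + 1 := ⟨r - 1, by omega⟩
  obtain ⟨m, rfl⟩ : ∃ m, n = m + 1 := ⟨n - 1, by omega⟩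
  rw [Nat.add_sub_cancel] at hn
  have hd : d ≤ m.choose k := by
    refine Nat.le_of_mul_le_mul_left ?_ k.factorial_pos
    calc k.factorial * d ≤ m + 1 - k := by omega
      _ ≤ (m + 1 - k) ^ k := Nat.le_self_pow (by omega) _
      _ ≤ k.factorial * m.choose k := by
        have hpow := Nat.pow_le_choose (α := ℚ) k m
        rw [div_le_iff₀' (by positivity)] at hpow
        exact_mod_cast hpow
  refine Nat.div_le_of_le_mul ?_
  rw [mul_comm (k + 1), ← Nat.add_one_mul_choose_eq, mul_comm]
  gcongr

/-! ### Analytic estimates -/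

lemma factorial_le_sqrt_mul_pow {n : ℕ} (hn : n ≠ 0) :
    (n.factorial : ℝ) ≤ exp 1 * √n * (n / exp 1) ^ n := by
  obtain ⟨m, rfl⟩ := Nat.exists_eq_succ_of_ne_zero hn
  have hseq : Stirling.stirlingSeq (m + 1) ≤ exp 1 / √2 :=
    (Stirling.stirlingSeq'_antitone m.zero_le).trans_eq Stirling.stirlingSeq_one
  rw [Stirling.stirlingSeq, div_le_iff₀ (by positivity)] at hseq
  calc ((m + 1).factorial : ℝ)
      ≤ exp 1 / √2 * (√(2 * (m + 1 : ℕ)) * ((m + 1 : ℕ) / exp 1) ^ (m + 1)) := mod_cast hseq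
    _ = _ := by
      rw [sqrt_mul zero_le_two]
      field_simp

lemma factorial_floor_le {M : ℝ} (hM : 1 ≤ M) :
    (⌊M⌋₊.factorial : ℝ) ≤ M ^ ⌊M⌋₊ * (exp 2 * M * exp (-M)) := by
  set J := ⌊M⌋₊
  have hJ : 0 < J := Nat.floor_pos.2 hM
  have hJM : (J : ℝ) ≤ M := Nat.floor_le (by linarith)
  have hsqrt : √(J : ℝ) ≤ J := sqrt_le_self_iff.2 (.inr (mod_cast hJ))
  have hexp : exp (-J) ≤ exp 1 * exp (-M) := by
    rw [← exp_add]
    exact exp_le_exp.2 (by linarith [Nat.lt_floor_add_one M])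
  calc (J.factorial : ℝ) ≤ exp 1 * √J * (J / exp 1) ^ J := factorial_le_sqrt_mul_pow hJ.ne'
    _ = exp 1 * √J * (J ^ J * exp (-J)) := by
      rw [div_pow, ← exp_nat_mul, mul_one, exp_neg, div_eq_mul_inv]
    _ ≤ exp 1 * M * (M ^ J * (exp 1 * exp (-M))) := by
      gcongr
      exact hsqrt.trans hJM
    _ = M ^ J * (exp 1 * exp 1 * M * exp (-M)) := by ring
    _ = M ^ J * (exp 2 * M * exp (-M)) := by rw [← exp_add, one_add_one_eq_two]

lemma choose_le_exp_mul_one_sub_log {n k : ℕ} {T : ℝ} (hT : 0 < T) (h : T * n ≤ k) :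
    (n.choose k : ℝ) ≤ exp (k * (1 - log T)) := by
  have hn : (n : ℝ) ≤ k / T := by rwa [le_div_iff₀' hT]
  calc (n.choose k : ℝ) ≤ n ^ k / k.factorial := Nat.choose_le_pow_div k n
    _ ≤ (k / T) ^ k / k.factorial := by gcongr
    _ = k ^ k / k.factorial / T ^ k := by rw [div_pow, div_right_comm]
    _ ≤ exp k / T ^ k := by
      gcongr
      exact pow_div_factorial_le_exp _ k.cast_nonneg k
    _ = exp (k * (1 - log T)) := by rw [mul_one_sub, exp_sub, exp_nat_mul, exp_log hT]

lemma mul_pow_le_mul_factorial {R : Type*} [CommSemiring R] [PartialOrder R] [IsOrderedRing R]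
    {N : ℕ → R} {M : R} (hM : 0 ≤ M) (J : ℕ) (h : ∀ j < J, N j * M ≤ N (j + 1) * (j + 1)) :
    N 0 * M ^ J ≤ N J * J.factorial := by
  induction J with
  | zero => simp
  | succ J ih =>
    calc N 0 * M ^ (J + 1) = N 0 * M ^ J * M := by ring
      _ ≤ N J * J.factorial * M :=
        mul_le_mul_of_nonneg_right (ih fun j hj ↦ h j (hj.trans J.lt_succ_self)) hM
      _ = N J * M * J.factorial := by ring
      _ ≤ N (J + 1) * (J + 1) * J.factorial :=
        mul_le_mul_of_nonneg_right (h J J.lt_succ_self) (Nat.cast_nonneg _)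
      _ = N (J + 1) * (J + 1).factorial := by push_cast [Nat.factorial_succ]; ring

lemma one_sub_add_mul_le_mul_one_sub_pow {a b : ℝ} (ha0 : 0 ≤ a) (ha1 : a ≤ 1) (hb0 : 0 ≤ b)
    (hb1 : b ≤ 1) (r : ℕ) : 1 - (a + r * b) ≤ (1 - a) * (1 - b) ^ r := by
  have hpow : 1 - r * b ≤ (1 - b) ^ r := by
    simpa only [← sub_eq_add_neg, mul_neg] using
      one_add_mul_le_pow (a := -b) (by linarith) r
  calc 1 - (a + r * b) ≤ (1 - a) * (1 - r * b) := by
        have : 0 ≤ a * (r * b) := by positivity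
        linarith
    _ ≤ (1 - a) * (1 - b) ^ r := by gcongr

/-! ### Sets of density about `T` -/

/-- An exponential rate for independence: sets `S` with `T ≤ |S|/n ≤ 2T` are independent with
probability at most `exp (-(switchingRate r d T * |S|))`, up to a polynomial factor. The factor
`1 - 4rT` absorbs the switchings that are lost because edges meet `S` or are near to each other. -/
noncomputable def switchingRate (r d : ℕ) (T : ℝ) : ℝ :=
  (1 - 4 * r * T) * (d / r * T ^ (r - 1))

section SwitchingRate

variable {r d : ℕ} {T : ℝ}

lemma mul_lt_one_of_one_le_switchingRate (hT : 0 ≤ T) (hm : 1 ≤ switchingRate r d T) :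
    4 * r * T < 1 := by
  have hnonneg : 0 ≤ d / r * T ^ (r - 1) := by positivity
  exact sub_pos.1 (pos_of_mul_pos_left (one_pos.trans_le hm) hnonneg)

lemma mul_switchingRate_le (hr : 2 ≤ r) (hT0 : 0 ≤ T) (hT1 : T ≤ 1) :
    r * switchingRate r d T ≤ d * T := by
  have hpow : T ^ (r - 1) ≤ T := pow_le_of_le_one hT0 hT1 (by omega)
  calc r * switchingRate r d T = (1 - 4 * r * T) * (d * T ^ (r - 1)) := by
        rw [switchingRate]; field_simp
    _ ≤ 1 * (d * T ^ (r - 1)) := by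
        gcongr
        exact sub_le_self _ (by positivity)
    _ ≤ d * T := by rw [one_mul]; gcongr

lemma switchingRate_mul_le {n k : ℝ} (hr : 1 ≤ r) (hn : 0 < n) (hT : 0 ≤ T) (hrT : 4 * r * T ≤ 1)
    (hk : T * n ≤ k) :
    switchingRate r d T * k ≤
      (1 - 2 * r * T) * (1 - 2 * T) ^ r * (n * d / r * (k / n) ^ r) := by
  have hk0 : 0 ≤ k := (by positivity : 0 ≤ T * n).trans hk
  have hr' : (1 : ℝ) ≤ r := mod_cast hr
  have hbernoulli : 1 - 4 * r * T ≤ (1 - 2 * r * T) * (1 - 2 * T) ^ r := by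
    have := one_sub_add_mul_le_mul_one_sub_pow (a := 2 * r * T) (b := 2 * T)
      (by positivity) (by linarith) (by positivity) (by nlinarith) r
    linarith
  calc switchingRate r d T * k = (1 - 4 * r * T) * (d / r * T ^ (r - 1) * k) := mul_assoc _ _ _
    _ ≤ (1 - 2 * r * T) * (1 - 2 * T) ^ r * (d / r * (k / n) ^ (r - 1) * k) := by
        have : 0 ≤ (1 - 2 * r * T) * (1 - 2 * T) ^ r := (sub_nonneg.2 hrT).trans hbernoulli
        gcongr
        rwa [le_div_iff₀ hn]
    _ = _ := by
        obtain ⟨q, rfl⟩ := Nat.exists_eq_add_of_le' hr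
        rw [Nat.add_sub_cancel, pow_succ (k / n)]
        field_simp

end SwitchingRate

section Density

variable {V : Type*} [DecidableEq V] [Fintype V] {r d : ℕ} {S : Finset V} {T : ℝ}

lemma cast_card_level_mul_le (hr : 2 ≤ r) (hd : 0 < d) (hV : 0 < Fintype.card V) (j : ℕ) {a b : ℝ}
    (ha : r * #S ≤ a * Fintype.card V) (hb1 : b ≤ 1)
    (hb : r * j + (r + 1) * (r * (r * d) ^ 2) ≤ b * (#S * d)) :
    (#(level r d S j) : ℝ) * ((1 - a) * (1 - b) ^ r *
        (Fintype.card V * d / r * (#S / Fintype.card V) ^ r)) ≤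
      #(level r d S (j + 1)) * (j + 1) := by
  set n := Fintype.card V
  have hb0 : 0 ≤ 1 - b := sub_nonneg.2 hb1
  have hX : n * d * (1 - a) ≤ ((n * d - r * (#S * d) : ℕ) : ℝ) := by
    have hsub : (n : ℝ) * d ≤ (n * d - r * (#S * d) : ℕ) + r * (#S * d) := mod_cast le_tsub_add
    have := mul_le_mul_of_nonneg_right ha (d.cast_nonneg (α := ℝ))
    linarith
  have hY : #S * d * (1 - b) ≤ ((#S * d - r * j - (r + 1) * (r * (r * d) ^ 2) : ℕ) : ℝ) := by
    have hsub : (#S : ℝ) * d ≤ (#S * d - r * j - (r + 1) * (r * (r * d) ^ 2) : ℕ) +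
        (r * j + (r + 1) * (r * (r * d) ^ 2)) := by
      rw [Nat.sub_sub]
      exact mod_cast le_tsub_add
    linarith
  have hlevel : (#(level r d S j) : ℝ) * (((n * d - r * (#S * d) : ℕ) : ℝ) *
        ((#S * d - r * j - (r + 1) * (r * (r * d) ^ 2) : ℕ) : ℝ) ^ r) ≤
      #(level r d S (j + 1)) * ((j + 1) * r * (n * d) ^ r) :=
    mod_cast card_level_mul_le (d := d) hr S j
  have hpos : (0 : ℝ) < r * (n * d) ^ r := by positivity
  refine le_of_mul_le_mul_right ?_ hpos
  calc #(level r d S j) * ((1 - a) * (1 - b) ^ r * (n * d / r * (#S / n) ^ r)) *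
        (r * (n * d) ^ r)
      = #(level r d S j) * (n * d * (1 - a) * (#S * d * (1 - b)) ^ r) := by
        simp only [div_pow, mul_pow]
        field_simp
    _ ≤ _ := by gcongr
    _ ≤ _ := hlevel
    _ = _ := by ring

lemma card_level_mul_switchingRate_le (hr : 2 ≤ r) (hd : 0 < d) (hV : 0 < Fintype.card V)
    (hT : 0 < T) (hm : 1 ≤ switchingRate r d T) (hlower : T * Fintype.card V ≤ #S)
    (hupper : #S ≤ 2 * T * Fintype.card V)
    (hnear : (r + 1) * (r * (r * d) ^ 2) ≤ T * (#S * d)) {j : ℕ}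
    (hj : j ≤ switchingRate r d T * #S) :
    (#(level r d S j) : ℝ) * (switchingRate r d T * #S) ≤ #(level r d S (j + 1)) * (j + 1) := by
  have hr' : (2 : ℝ) ≤ r := mod_cast hr
  have hrT := mul_lt_one_of_one_le_switchingRate hT.le hm
  have hT1 : 2 * T ≤ 1 := by nlinarith
  have hrj : r * j ≤ T * (#S * d) := by
    calc (r : ℝ) * j ≤ r * (switchingRate r d T * #S) := by gcongr
      _ = r * switchingRate r d T * #S := by ring
      _ ≤ d * T * #S := mul_le_mul_of_nonneg_right
        (mul_switchingRate_le hr hT.le (by linarith)) (Nat.cast_nonneg _)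
      _ = T * (#S * d) := by ring
  refine le_trans ?_ (cast_card_level_mul_le hr hd hV j (a := 2 * r * T) (b := 2 * T) ?_ hT1 ?_)
  · exact mul_le_mul_of_nonneg_left
      (switchingRate_mul_le (by omega) (mod_cast hV) hT.le hrT.le hlower) (Nat.cast_nonneg _)
  · nlinarith
  · linarith

/-- Iterate the level ratio up to the level `⌊switchingRate r d T * #S⌋`, where the resulting bound
is smallest. -/
lemma card_level_zero_le (hr : 2 ≤ r) (hd : 0 < d) (hV : 0 < Fintype.card V) (hT : 0 < T)
    (hm : 1 ≤ switchingRate r d T) (hlower : T * Fintype.card V ≤ #S)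
    (hupper : #S ≤ 2 * T * Fintype.card V)
    (hnear : (r + 1) * (r * (r * d) ^ 2) ≤ T * (#S * d)) :
    (#(level r d S 0) : ℝ) ≤ #{E : Finset (Finset V) | IsRegularHypergraph r d E} *
      (exp 2 * (switchingRate r d T * #S) * exp (-(switchingRate r d T * #S))) := by
  have hS : (1 : ℝ) ≤ #S := by
    have : (0 : ℝ) < #S := (by positivity : 0 < T * Fintype.card V).trans_le hlower
    exact_mod_cast this
  set M := switchingRate r d T * #S
  have hM1 : 1 ≤ M := one_le_mul_of_one_le_of_one_le hm hS
  have hchain := mul_pow_le_mul_factorial (N := fun j ↦ (#(level r d S j) : ℝ))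
    (zero_le_one.trans hM1) ⌊M⌋₊ fun j hj ↦
      card_level_mul_switchingRate_le hr hd hV hT hm hlower hupper hnear
        ((Nat.cast_le.2 hj.le).trans (Nat.floor_le (zero_le_one.trans hM1)))
  have hlevel : #(level r d S ⌊M⌋₊) ≤ #{E : Finset (Finset V) | IsRegularHypergraph r d E} :=
    card_le_card (monotone_filter_right _ fun _ _ h ↦ h.1)
  refine le_of_mul_le_mul_right ?_ (by positivity : 0 < M ^ ⌊M⌋₊)
  calc (#(level r d S 0) : ℝ) * M ^ ⌊M⌋₊ ≤ #(level r d S ⌊M⌋₊) * ⌊M⌋₊.factorial := hchain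
    _ ≤ #{E : Finset (Finset V) | IsRegularHypergraph r d E} *
          (M ^ ⌊M⌋₊ * (exp 2 * M * exp (-M))) := by
        gcongr
        exact factorial_floor_le hM1
    _ = _ := by ring

end Density

/-! ### The union bound -/

lemma uniformProb_le_one {α : Type*} (F : Finset α) (P : α → Prop) : uniformProb F P ≤ 1 :=
  div_le_one_of_le₀ (mod_cast card_filter_le F P) (Nat.cast_nonneg _)

lemma one_sub_le_uniformProb {α : Type*} {F : Finset α} (hF : F.Nonempty) {P : α → Prop} {δ : ℝ}
    (h : (#{x ∈ F | ¬ P x} : ℝ) ≤ #F * δ) : 1 - δ ≤ uniformProb F P := by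
  have hsplit : (#{x ∈ F | P x} : ℝ) + #{x ∈ F | ¬ P x} = #F :=
    mod_cast card_filter_add_card_filter_not (s := F) P
  rw [uniformProb, le_div_iff₀ (mod_cast hF.card_pos)]
  linarith

lemma exists_indepSet_card_eq {n k : ℕ} {E : Finset (Finset (Fin n))} (hE : ∅ ∉ E)
    (hk : k ≤ independenceNumber E) : ∃ S : Finset (Fin n), #S = k ∧ IndepSet E S := by
  have hmem : independenceNumber E ∈ {s | ∃ S : Finset (Fin n), #S = s ∧ IndepSet E S} := by
    refine Nat.sSup_mem ⟨0, ∅, card_empty, fun e he hsub ↦ hE (subset_empty.1 hsub ▸ he)⟩ ⟨n, ?_⟩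
    rintro _ ⟨S, rfl, -⟩
    exact card_finset_fin_le S
  obtain ⟨S, hS, hindep⟩ := hmem
  obtain ⟨S', hS', hcard⟩ := exists_subset_card_eq (hk.trans_eq hS.symm)
  exact ⟨S', hcard, fun e he hsub ↦ hindep e he (hsub.trans hS')⟩

lemma card_le_independenceNumber_le {n r d k : ℕ} (hr : r ≠ 0) {B : ℝ}
    (hB : ∀ S : Finset (Fin n), #S = k → (#(level r d S 0) : ℝ) ≤ B) :
    (#{E ∈ regularFamily n r d | k ≤ independenceNumber E} : ℝ) ≤ n.choose k * B := by
  have hcover : {E ∈ regularFamily n r d | k ≤ independenceNumber E} ⊆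
      (powersetCard k univ).biUnion fun S : Finset (Fin n) ↦ level r d S 0 := by
    intro E hE
    obtain ⟨hE, hk⟩ := mem_filter.1 hE
    rw [mem_regularFamily] at hE
    obtain ⟨S, hS, hindep⟩ := exists_indepSet_card_eq (fun h ↦ hr (hE.card_edge ∅ h).symm) hk
    refine mem_biUnion.2 ⟨S, mem_powersetCard.2 ⟨subset_univ S, hS⟩, mem_level.2 ⟨hE, ?_⟩⟩
    rw [card_eq_zero, filter_eq_empty_iff]
    exact hindep
  calc (#{E ∈ regularFamily n r d | k ≤ independenceNumber E} : ℝ)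
      ≤ ∑ S ∈ powersetCard k (univ : Finset (Fin n)), (#(level r d S 0) : ℝ) :=
        mod_cast (card_le_card hcover).trans card_biUnion_le
    _ ≤ #(powersetCard k (univ : Finset (Fin n))) • B :=
        sum_le_card_nsmul _ _ _ fun S hS ↦ hB S (mem_powersetCard.1 hS).2
    _ = n.choose k * B := by rw [card_powersetCard, card_fin, nsmul_eq_mul]

lemma choose_mul_exp_neg_le {n k : ℕ} {T m : ℝ} (hT : 0 < T) (hk : T * n ≤ k)
    (hlog : 2 - log T ≤ m) : n.choose k * exp (-(m * k)) ≤ exp (-k) := by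
  calc n.choose k * exp (-(m * k)) ≤ exp (k * (1 - log T)) * exp (-(m * k)) := by
        gcongr
        exact choose_le_exp_mul_one_sub_log hT hk
    _ = exp (k * (1 - log T - m)) := by rw [← exp_add]; ring_nf
    _ ≤ exp (k * (-1)) := by
        gcongr
        linarith
    _ = exp (-k) := by rw [mul_neg_one]

section UnionBound

variable {n r d : ℕ} {T : ℝ}

/-- The condition `2 - log T ≤ switchingRate r d T` makes the exponential rate beat the number
`exp (k * (1 - log T))` of candidate sets of size `k` with `exp (-k)` to spare. -/
lemma card_le_independenceNumber_le_mul_exp {k : ℕ} (hr : 2 ≤ r) (hd : 0 < d) (hn : 0 < n)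
    (hT : 0 < T) (hT1 : T ≤ 1) (hlog : 2 - log T ≤ switchingRate r d T) (hlower : T * n ≤ k)
    (hupper : k ≤ 2 * T * n) (hnear : (r + 1) * (r * (r * d) ^ 2) ≤ T * (k * d)) :
    (#{E ∈ regularFamily n r d | k ≤ independenceNumber E} : ℝ) ≤
      #(regularFamily n r d) * (exp 2 * switchingRate r d T * (k * exp (-k))) := by
  set m := switchingRate r d T
  have hm : 1 ≤ m := by linarith [log_nonpos hT.le hT1]
  have hfamily : regularFamily n r d =
      ({E | IsRegularHypergraph r d E} : Finset (Finset (Finset (Fin n)))) := by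
    ext E
    rw [mem_regularFamily, mem_filter, and_iff_right (mem_univ E)]
  have hlevel (S : Finset (Fin n)) (hS : #S = k) : (#(level r d S 0) : ℝ) ≤
      #(regularFamily n r d) * (exp 2 * (m * k) * exp (-(m * k))) := by
    subst hS
    rw [hfamily]
    exact card_level_zero_le hr hd (by rwa [Fintype.card_fin]) hT hm
      (by rwa [Fintype.card_fin]) (by rwa [Fintype.card_fin]) hnear
  calc (#{E ∈ regularFamily n r d | k ≤ independenceNumber E} : ℝ)
      ≤ n.choose k * (#(regularFamily n r d) * (exp 2 * (m * k) * exp (-(m * k)))) :=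
        card_le_independenceNumber_le (by omega) hlevel
    _ = #(regularFamily n r d) * (exp 2 * m * (k * (n.choose k * exp (-(m * k))))) := by ring
    _ ≤ #(regularFamily n r d) * (exp 2 * m * (k * exp (-k))) := by
        gcongr
        exact choose_mul_exp_neg_le hT hlower hlog

lemma one_sub_le_uniformProb_independenceNumber_le (hr : 2 ≤ r) (hd : 0 < d) (hT : 0 < T)
    (hT1 : T ≤ 1) (hlog : 2 - log T ≤ switchingRate r d T) (hF : (regularFamily n r d).Nonempty)
    (hTn : 1 ≤ T * n) (hnear : (r + 1) * (r * (r * d) ^ 2) ≤ T * (T * n * d)) :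
    1 - exp 2 * switchingRate r d T *
        ((⌊T * n⌋₊ + 1 : ℕ) * exp (-(⌊T * n⌋₊ + 1 : ℕ))) ≤
      uniformProb (regularFamily n r d) fun E ↦ (independenceNumber E : ℝ) ≤ T * n := by
  have hTn0 : 0 ≤ T * n := zero_le_one.trans hTn
  have hn : 0 < n := Nat.pos_of_ne_zero fun h ↦ by norm_num [h] at hTn
  have hlower : T * n ≤ (⌊T * n⌋₊ + 1 : ℕ) := by
    push_cast
    exact (Nat.lt_floor_add_one _).le
  have hupper : ((⌊T * n⌋₊ + 1 : ℕ) : ℝ) ≤ 2 * T * n := by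
    push_cast
    linarith [Nat.floor_le hTn0]
  refine one_sub_le_uniformProb hF ?_
  simp only [← Nat.le_floor_iff hTn0, not_le, ← Nat.succ_le_iff]
  refine card_le_independenceNumber_le_mul_exp hr hd hn hT hT1 hlog hlower hupper
    (hnear.trans ?_)
  gcongr

lemma tendsto_floor_add_one_mul_exp_neg (hT : 0 < T) :
    Tendsto (fun n : ℕ ↦ ((⌊T * n⌋₊ + 1 : ℕ) : ℝ) * exp (-(⌊T * n⌋₊ + 1 : ℕ))) atTop (nhds 0) := by
  have hxexp : Tendsto (fun x : ℝ ↦ x * exp (-x)) atTop (nhds 0) := by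
    simpa only [pow_one] using tendsto_pow_mul_exp_neg_atTop_nhds_zero 1
  have hfloor : Tendsto (fun n : ℕ ↦ ⌊T * n⌋₊) atTop atTop :=
    tendsto_nat_floor_atTop.comp (tendsto_natCast_atTop_atTop.const_mul_atTop hT)
  exact hxexp.comp
    (tendsto_natCast_atTop_atTop.comp ((tendsto_add_atTop_nat 1).comp hfloor))

theorem tendsto_uniformProb_independenceNumber_le (hr : 2 ≤ r) (hd : 0 < d) (hT : 0 < T)
    (hT1 : T ≤ 1) (hlog : 2 - log T ≤ switchingRate r d T) :
    Tendsto (fun n : ℕ ↦ uniformProb (regularFamily n r d)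
        fun E ↦ (independenceNumber E : ℝ) ≤ T * n)
      (atTop ⊓ 𝓟 {n : ℕ | r ∣ d * n}) (nhds 1) := by
  have hlimit : Tendsto (fun n : ℕ ↦ 1 - exp 2 * switchingRate r d T *
      ((⌊T * n⌋₊ + 1 : ℕ) * exp (-(⌊T * n⌋₊ + 1 : ℕ)))) atTop (nhds 1) := by
    simpa only [mul_zero, sub_zero] using
      ((tendsto_floor_add_one_mul_exp_neg hT).const_mul (exp 2 * switchingRate r d T)).const_sub 1
  have hTn : Tendsto (fun n : ℕ ↦ T * (n : ℝ)) atTop atTop :=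
    tendsto_natCast_atTop_atTop.const_mul_atTop hT
  have hnearTendsto : Tendsto (fun n : ℕ ↦ T * (T * n * d)) atTop atTop :=
    (hTn.atTop_mul_const (by positivity)).const_mul_atTop hT
  have hlarge := (hTn.eventually_ge_atTop 1).and <|
    (hnearTendsto.eventually_ge_atTop ((r + 1) * (r * (r * d) ^ 2))).and
      (eventually_ge_atTop (r + (r - 1).factorial * d))
  have hdvd : ∀ᶠ n in atTop ⊓ 𝓟 {n : ℕ | r ∣ d * n}, r ∣ d * n :=
    mem_inf_of_right (mem_principal_self _)
  refine tendsto_of_tendsto_of_tendsto_of_le_of_le' (hlimit.mono_left inf_le_left)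
    tendsto_const_nhds ?_ (Eventually.of_forall fun n ↦ uniformProb_le_one _ _)
  filter_upwards [hdvd, hlarge.filter_mono inf_le_left] with n hdvd ⟨hTn, hnear, hn⟩
  obtain ⟨E, hE⟩ := exists_isRegularHypergraph (V := Fin n) (r := r) (d := d)
    (by rwa [Fintype.card_fin]) (by rw [Fintype.card_fin]; exact div_le_choose_of_le hr hn)
  exact one_sub_le_uniformProb_independenceNumber_le hr hd hT hT1 hlog
    ⟨E, mem_regularFamily.2 hE⟩ hTn hnear

end UnionBound

/-! ### The critical density -/

/-- The asymptotic independence ratio `(r log d / ((r - 1) d)) ^ (1 / (r - 1))` of random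
`d`-regular `r`-uniform hypergraphs, the threshold at which the first moment method starts to
work. -/
noncomputable def criticalDensity (r d : ℕ) : ℝ :=
  (r * log d / (((r : ℝ) - 1) * d)) ^ ((1 : ℝ) / ((r : ℝ) - 1))

section CriticalDensity

variable {r d : ℕ} {ε : ℝ}

lemma criticalDensity_pos (hr : 2 ≤ r) (hd : 0 < log d) : 0 < criticalDensity r d := by
  have hr' : (0 : ℝ) < (r : ℝ) - 1 := sub_pos.2 (mod_cast hr)
  have hd' : (0 : ℝ) < d := Nat.cast_pos.2 (Nat.pos_of_ne_zero fun h ↦ by simp [h] at hd)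
  have : (0 : ℝ) < r * log d := by positivity
  exact rpow_pos_of_pos (by positivity) _

lemma criticalDensity_pow (hr : 2 ≤ r) (d : ℕ) :
    criticalDensity r d ^ (r - 1) = r * log d / (((r : ℝ) - 1) * d) := by
  have hr' : (r : ℝ) - 1 = (r - 1 : ℕ) := by rw [Nat.cast_pred (by omega)]
  have hnonneg : 0 ≤ r * log d / (((r - 1 : ℕ) : ℝ) * d) :=
    div_nonneg (mul_nonneg r.cast_nonneg (log_natCast_nonneg d)) (by positivity)
  rw [criticalDensity, one_div, hr']
  exact rpow_inv_natCast_pow hnonneg (by omega)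

lemma tendsto_criticalDensity (hr : 2 ≤ r) : Tendsto (criticalDensity r) atTop (nhds 0) := by
  have hexponent : (0 : ℝ) < 1 / ((r : ℝ) - 1) := one_div_pos.2 (sub_pos.2 (mod_cast hr))
  have hlog : Tendsto (fun d : ℕ ↦ log d / d) atTop (nhds 0) :=
    isLittleO_log_id_atTop.tendsto_div_nhds_zero.comp tendsto_natCast_atTop_atTop
  have hbase : Tendsto (fun d : ℕ ↦ r * log d / (((r : ℝ) - 1) * d)) atTop (nhds 0) := by
    simpa only [div_mul_div_comm, mul_zero] using hlog.const_mul ((r : ℝ) / (r - 1))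
  have hpow := hbase.rpow_const (Or.inr hexponent.le)
  rwa [zero_rpow hexponent.ne'] at hpow

lemma neg_log_criticalDensity_le (hr : 2 ≤ r) (hd : 1 ≤ log d) :
    -log (criticalDensity r d) ≤ log d / ((r : ℝ) - 1) := by
  have hr' : (0 : ℝ) < (r : ℝ) - 1 := sub_pos.2 (mod_cast hr)
  have hd' : (0 : ℝ) < d := Nat.cast_pos.2 (Nat.pos_of_ne_zero fun h ↦ by norm_num [h] at hd)
  have hinv : (d : ℝ)⁻¹ ≤ r * log d / (((r : ℝ) - 1) * d) := by
    rw [← one_div, div_le_div_iff₀ hd' (by positivity), one_mul]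
    gcongr
    nlinarith
  have hlog : -log d ≤ log (r * log d / (((r : ℝ) - 1) * d)) := by
    rw [← log_inv]
    exact log_le_log (inv_pos.2 hd') hinv
  rw [criticalDensity, log_rpow ((inv_pos.2 hd').trans_le hinv), one_div_mul_eq_div, ← neg_div]
  gcongr
  linarith

lemma two_sub_log_le_switchingRate (hr : 2 ≤ r) (hε : 0 < ε) (hd : 1 ≤ log d)
    (hlarge : 2 ≤ ε / 2 * (log d / ((r : ℝ) - 1)))
    (hsmall : 4 * r * ((1 + ε) * criticalDensity r d) ≤ ε / (2 * (1 + ε))) :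
    2 - log ((1 + ε) * criticalDensity r d) ≤
      switchingRate r d ((1 + ε) * criticalDensity r d) := by
  have hr' : (0 : ℝ) < (r : ℝ) - 1 := sub_pos.2 (mod_cast hr)
  have hd' : (0 : ℝ) < d := Nat.cast_pos.2 (Nat.pos_of_ne_zero fun h ↦ by norm_num [h] at hd)
  have hc := criticalDensity_pos hr (one_pos.trans_le hd)
  have hcount : -log ((1 + ε) * criticalDensity r d) ≤ log d / ((r : ℝ) - 1) := by
    rw [log_mul (by positivity) hc.ne']
    linarith [log_nonneg (le_add_of_nonneg_right hε.le), neg_log_criticalDensity_le hr hd]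
  set T := (1 + ε) * criticalDensity r d with hT
  calc 2 - log T ≤ (1 + ε / 2) * (log d / ((r : ℝ) - 1)) := by linarith
    _ = (1 - ε / (2 * (1 + ε))) * (1 + ε) * (log d / ((r : ℝ) - 1)) := by
        field_simp
        ring
    _ ≤ (1 - 4 * r * T) * (1 + ε) ^ (r - 1) * (log d / ((r : ℝ) - 1)) := by
        have hloss : ε / (2 * (1 + ε)) ≤ 1 := div_le_one_of_le₀ (by linarith) (by positivity)
        have hrT : 0 ≤ 1 - 4 * r * T := sub_nonneg.2 (hsmall.trans hloss)
        gcongr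
        exact le_self_pow₀ (by linarith) (by omega)
    _ = switchingRate r d T := by
        rw [switchingRate, hT, mul_pow, criticalDensity_pow hr]
        field_simp

lemma eventually_two_sub_log_le_switchingRate (hr : 2 ≤ r) (hε : 0 < ε) :
    ∀ᶠ d : ℕ in atTop, 2 - log ((1 + ε) * criticalDensity r d) ≤
      switchingRate r d ((1 + ε) * criticalDensity r d) := by
  have hr' : (0 : ℝ) < (r : ℝ) - 1 := sub_pos.2 (mod_cast hr)
  have hlog : Tendsto (fun d : ℕ ↦ log d) atTop atTop :=
    tendsto_log_atTop.comp tendsto_natCast_atTop_atTop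
  have hlarge : Tendsto (fun d : ℕ ↦ ε / 2 * (log d / ((r : ℝ) - 1))) atTop atTop :=
    (hlog.atTop_div_const hr').const_mul_atTop (by positivity)
  have hsmall : Tendsto (fun d : ℕ ↦ 4 * r * ((1 + ε) * criticalDensity r d)) atTop (nhds 0) := by
    simpa only [mul_zero] using ((tendsto_criticalDensity hr).const_mul (1 + ε)).const_mul
      (4 * (r : ℝ))
  filter_upwards [hlog.eventually_ge_atTop 1, hlarge.eventually_ge_atTop 2,
    hsmall.eventually_le_const (by positivity : 0 < ε / (2 * (1 + ε)))] with d hd hlarge hsmall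
  exact two_sub_log_le_switchingRate hr hε hd hlarge hsmall

end CriticalDensity

theorem independence_number_of_random_regular_hypergraph_upper_general
    (r : ℕ) (hr : 2 ≤ r) (ε : ℝ) (hε : 0 < ε) :
    ∃ d₀ : ℕ, ∀ d : ℕ, d₀ ≤ d →
      Filter.Tendsto
        (fun n : ℕ =>
          uniformProb (regularFamily n r d)
            (fun E =>
              (independenceNumber E : ℝ) ≤
                (1 + ε) * ((r * Real.log d / (((r : ℝ) - 1) * d)) ^ ((1 : ℝ) / ((r : ℝ) - 1))) * n))
        (Filter.atTop ⊓ Filter.principal {n : ℕ | r ∣ d * n}) (nhds 1) := by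
  have hsmall : ∀ᶠ d : ℕ in atTop, (1 + ε) * criticalDensity r d ≤ 1 :=
    ((tendsto_criticalDensity hr).const_mul (1 + ε)).eventually_le_const (by norm_num)
  obtain ⟨d₀, hd₀⟩ := eventually_atTop.1 <|
    (eventually_two_sub_log_le_switchingRate hr hε).and (hsmall.and (eventually_ge_atTop 2))
  refine ⟨d₀, fun d hd ↦ ?_⟩
  obtain ⟨hrate, hle, hd2⟩ := hd₀ d hd
  have hc := criticalDensity_pos hr (log_pos (Nat.one_lt_cast.2 hd2))
  exact tendsto_uniformProb_independenceNumber_le hr (by omega) (by positivity) hle hrate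

/-- For every integer `r ≥ 3` and every `ε > 0` there exists `d₀ = d₀(r, ε)` such that
for every fixed integer `d ≥ d₀`, w.h.p.
`α(H_r(n,d)) ≤ (1+ε)·(r log d/((r−1)d))^(1/(r−1))·n`. -/
theorem independence_number_of_random_regular_hypergraph_upper
    (r : ℕ) (hr : 3 ≤ r) (ε : ℝ) (hε : 0 < ε) :
    ∃ d₀ : ℕ, ∀ d : ℕ, d₀ ≤ d →
      Filter.Tendsto
        (fun n : ℕ =>
          uniformProb (regularFamily n r d)
            (fun E =>
              (independenceNumber E : ℝ) ≤
                (1 + ε) * ((r * Real.log d / (((r : ℝ) - 1) * d)) ^ ((1 : ℝ) / ((r : ℝ) - 1))) * n))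
        (Filter.atTop ⊓ Filter.principal {n : ℕ | r ∣ d * n}) (nhds 1) :=
  independence_number_of_random_regular_hypergraph_upper_general r (by omega) ε hε
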